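/- arXiv:2605.26234 — 2 statements merged into one kernel-verified Lean document; each statement's English description precedes it below -/
import Mathlib

section
/- Let n ≥ 1, let γ : S¹ → ℝⁿ be a smooth embedding, and let Γ be a smooth map from an open neighbourhood of D² to ℝⁿ satisfying Γ(p) = γ(p) and ∂_r Γ(p) = γ(p) for all p ∈ S¹. Let ρ be a boundary defining function on D², let N : ℝⁿ-valued and f : ℝ-valued be smooth functions on a neighbourhood of D², and define v(p) = 2Γ(p)/(1 + ‖p‖²) + ρ(p)²·N(p) and u = (ρ·e^f, v) : D² → ℝ × ℝⁿ. Then the radial derivative ∂_r v(p) vanishes for every p ∈ S¹, and consequently for every p ∈ S¹ the image of the Fréchet derivative Du_p : ℝ² → ℝ × ℝⁿ contains the vector e₀ = (1,0); that is, the surface u(D²) meets the boundary hyperplane {0} × ℝⁿ orthogonally along its boundary curve γ. -/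
open Metric

noncomputable section

/-- The plane `ℝ²` with the Euclidean norm. -/
abbrev E2 : Type := EuclideanSpace ℝ (Fin 2)

/-- The vector `p^⊥ = (-p₂, p₁)`, the counterclockwise rotation of `p` by `π/2`;
directional derivatives in this direction at `p ∈ S¹` are tangential derivatives `∂_θ`. -/
def perp (p : E2) : E2 := (EuclideanSpace.equiv (Fin 2) ℝ).symm ![-(p 1), p 0]

/-- A boundary defining function on the closed unit disc `D²`: a smooth real-valued
function on an open neighbourhood `U` of `D²`, nonnegative on `D²`, whose zero set
within `D²` is exactly the unit circle, and whose Fréchet derivative is nonzero at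
every point of the unit circle. -/
structure IsBoundaryDefiningFunction (ρ : E2 → ℝ) (U : Set E2) : Prop where
  isOpen : IsOpen U
  disc_subset : closedBall (0 : E2) 1 ⊆ U
  smooth : ContDiffOn ℝ (⊤ : ℕ∞) ρ U
  nonneg : ∀ p ∈ closedBall (0 : E2) 1, 0 ≤ ρ p
  zero_iff : ∀ p ∈ closedBall (0 : E2) 1, (ρ p = 0 ↔ ‖p‖ = 1)
  fderiv_ne_zero : ∀ p : E2, ‖p‖ = 1 → fderiv ℝ ρ p ≠ 0

/-!
The factor `2 / (1 + ‖p‖²)` has radial logarithmic derivative `-1` on the unit sphere, so the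
boundary condition `∂_r Γ = Γ` makes `2Γ / (1 + ‖p‖²)` radially stationary there, and `ρ² N`
vanishes to second order. On the other hand `ρ` is constant on the sphere, so its nonzero
derivative is carried by the radial direction alone. Hence `Du_p` sends `p` to a nonzero multiple
of `e₀`.
-/

open scoped Topology

section Calculus

variable {𝕜 E F : Type*} [NontriviallyNormedField 𝕜] [NormedAddCommGroup E] [NormedSpace 𝕜 E]
  [NormedAddCommGroup F] [NormedSpace 𝕜 F]

theorem hasFDerivAt_smul_of_eq_zero {c : E → 𝕜} {c' : E →L[𝕜] 𝕜} {g : E → F} {x : E}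
    (hc : HasFDerivAt c c' x) (hcx : c x = 0) (hg : ContinuousAt g x) :
    HasFDerivAt (fun y => c y • g y) (c'.smulRight (g x)) x := by
  have hc_isBigO : c =O[𝓝 x] fun y => y - x := by
    simpa only [hcx, sub_zero] using hc.isBigO_sub
  have hg_isLittleO : (fun y => g y - g x) =o[𝓝 x] fun _ => (1 : ℝ) := by
    rw [Asymptotics.isLittleO_one_iff]
    exact tendsto_sub_nhds_zero_iff.2 hg
  have h_remainder : HasFDerivAt (fun y => c y • (g y - g x)) (0 : E →L[𝕜] F) x := by
    refine .of_isLittleO ?_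
    simpa [hcx] using hc_isBigO.norm_right.smul_isLittleO hg_isLittleO
  simpa [← smul_add] using (hc.smul_const (g x)).fun_add h_remainder

theorem hasFDerivAt_sq_smul_of_eq_zero {c : E → 𝕜} {g : E → F} {x : E}
    (hc : DifferentiableAt 𝕜 c x) (hcx : c x = 0) (hg : ContinuousAt g x) :
    HasFDerivAt (fun y => c y ^ 2 • g y) (0 : E →L[𝕜] F) x := by
  simpa [pow_two, mul_smul, hcx] using
    hasFDerivAt_smul_of_eq_zero hc.hasFDerivAt hcx (hc.continuousAt.smul hg)

theorem one_zero_mem_range_prod {a : E →L[𝕜] 𝕜} {b : E →L[𝕜] F} {x : E}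
    (ha : a x ≠ 0) (hb : b x = 0) : ((1 : 𝕜), (0 : F)) ∈ Set.range (a.prod b) :=
  ⟨(a x)⁻¹ • x, by simp [ha, hb]⟩

end Calculus

section Radial

variable {E F : Type*} [NormedAddCommGroup E] [NormedSpace ℝ E]
  [NormedAddCommGroup F] [NormedSpace ℝ F] {p : E}

theorem hasFDerivAt_norm_div_norm_smul (hp : p ≠ 0) (hnorm : DifferentiableAt ℝ (‖·‖) p) :
    HasFDerivAt (fun q => (‖p‖ / ‖q‖) • q)
      (.id ℝ E - (‖p‖⁻¹ • fderiv ℝ (‖·‖) p).smulRight p) p := by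
  have hp' : ‖p‖ ≠ 0 := norm_ne_zero_iff.2 hp
  have hscalar : HasDerivAt (fun t => ‖p‖ / t) (-‖p‖⁻¹) ‖p‖ :=
    ((hasDerivAt_const ‖p‖ ‖p‖).fun_div (hasDerivAt_id' ‖p‖) hp').congr_deriv
      (by field_simp; ring)
  have hscale := hscalar.comp_hasFDerivAt p hnorm.hasFDerivAt
  refine (hscale.smul (hasFDerivAt_id p)).congr_fderiv ?_
  ext w
  simp [hp', sub_eq_add_neg]

theorem fderiv_apply_eq_radial_of_const_on_sphere {φ : E → F} (hp : p ≠ 0)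
    (hnorm : DifferentiableAt ℝ (‖·‖) p) (hφ : DifferentiableAt ℝ φ p)
    (hconst : ∀ q, ‖q‖ = ‖p‖ → φ q = φ p) (w : E) :
    fderiv ℝ φ p w = (‖p‖⁻¹ * fderiv ℝ (‖·‖) p w) • fderiv ℝ φ p p := by
  -- `φ` is constant along the retraction `q ↦ (‖p‖ / ‖q‖) • q` onto the sphere through `p`.
  have hcomp : HasFDerivAt (fun q => φ ((‖p‖ / ‖q‖) • q)) _ p :=
    HasFDerivAt.comp p (by simpa [hp] using hφ.hasFDerivAt)
      (hasFDerivAt_norm_div_norm_smul hp hnorm)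
  have hlocal : (fun q => φ ((‖p‖ / ‖q‖) • q)) =ᶠ[𝓝 p] fun _ => φ p := by
    filter_upwards [isOpen_ne.mem_nhds hp] with q hq
    exact hconst _ (by simp [norm_smul, norm_ne_zero_iff.2 hq])
  have hzero := hcomp.unique ((hasFDerivAt_const (φ p) p).congr_of_eventuallyEq hlocal)
  simpa [sub_eq_zero] using DFunLike.congr_fun hzero w

theorem fderiv_apply_self_ne_zero_of_const_on_sphere {φ : E → F} (hp : p ≠ 0)
    (hnorm : DifferentiableAt ℝ (‖·‖) p) (hφ : DifferentiableAt ℝ φ p)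
    (hconst : ∀ q, ‖q‖ = ‖p‖ → φ q = φ p) (hφ' : fderiv ℝ φ p ≠ 0) :
    fderiv ℝ φ p p ≠ 0 := by
  contrapose! hφ'
  ext w
  simp [fderiv_apply_eq_radial_of_const_on_sphere hp hnorm hφ hconst w, hφ']

theorem hasFDerivAt_two_div_one_add_norm_sq (hnorm : DifferentiableAt ℝ (‖·‖) p) :
    HasFDerivAt (fun q => 2 / (1 + ‖q‖ ^ 2))
      (-(4 * ‖p‖ / (1 + ‖p‖ ^ 2) ^ 2) • fderiv ℝ (‖·‖) p) p := by
  have hscalar : HasDerivAt (fun t : ℝ => 2 / (1 + t ^ 2))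
      (-(4 * ‖p‖ / (1 + ‖p‖ ^ 2) ^ 2)) ‖p‖ := by
    have hden : HasDerivAt (fun t : ℝ => 1 + t ^ 2) (2 * ‖p‖) ‖p‖ := by
      simpa using (hasDerivAt_pow 2 ‖p‖).const_add 1
    exact ((hasDerivAt_const ‖p‖ (2 : ℝ)).fun_div hden (by positivity)).congr_deriv (by ring)
  exact hscalar.comp_hasFDerivAt p hnorm.hasFDerivAt

theorem fderiv_two_div_one_add_norm_sq_smul_apply_self {Γ : E → F} (hp : ‖p‖ = 1)
    (hnorm : DifferentiableAt ℝ (‖·‖) p) (hΓ : DifferentiableAt ℝ Γ p) :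
    fderiv ℝ (fun q => (2 / (1 + ‖q‖ ^ 2)) • Γ q) p p = fderiv ℝ Γ p p - Γ p := by
  have hcoeff : (2 : ℝ) / (1 + 1) = 1 := by norm_num
  have hslope : (4 : ℝ) / (1 + 1) ^ 2 = 1 := by norm_num
  rw [((hasFDerivAt_two_div_one_add_norm_sq hnorm).fun_smul hΓ.hasFDerivAt).fderiv]
  simp [hnorm.fderiv_norm_self, hp, hcoeff, hslope, sub_eq_add_neg]

theorem stereobiharmonic_model_orthogonal_at_boundary_general
    (hp : ‖p‖ = 1) (hnorm : DifferentiableAt ℝ (‖·‖) p)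
    {ρ f : E → ℝ} {Γ N : E → F}
    (hρ : DifferentiableAt ℝ ρ p) (hρ_sphere : ∀ q, ‖q‖ = 1 → ρ q = 0)
    (hρ' : fderiv ℝ ρ p ≠ 0) (hf : ContinuousAt f p) (hN : ContinuousAt N p)
    (hΓ : DifferentiableAt ℝ Γ p) (hΓ_rad : fderiv ℝ Γ p p = Γ p)
    {v : E → F} (hv : ∀ q, v q = (2 / (1 + ‖q‖ ^ 2)) • Γ q + ρ q ^ 2 • N q)
    {u : E → ℝ × F} (hu : ∀ q, u q = (ρ q * Real.exp (f q), v q)) :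
    fderiv ℝ v p p = 0 ∧ ((1 : ℝ), (0 : F)) ∈ Set.range (fderiv ℝ u p) := by
  have hp₀ : p ≠ 0 := norm_ne_zero_iff.1 (hp ▸ one_ne_zero)
  have hρ₀ : ρ p = 0 := hρ_sphere p hp
  have hvd : HasFDerivAt v (fderiv ℝ (fun q => (2 / (1 + ‖q‖ ^ 2)) • Γ q) p) p := by
    rw [funext hv]
    have hmain := (hasFDerivAt_two_div_one_add_norm_sq hnorm).differentiableAt.fun_smul hΓ
    simpa using hmain.hasFDerivAt.fun_add (hasFDerivAt_sq_smul_of_eq_zero hρ hρ₀ hN)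
  have hv_rad : fderiv ℝ v p p = 0 := by
    rw [hvd.fderiv, fderiv_two_div_one_add_norm_sq_smul_apply_self hp hnorm hΓ, hΓ_rad, sub_self]
  have hρ_rad : fderiv ℝ ρ p p ≠ 0 :=
    fderiv_apply_self_ne_zero_of_const_on_sphere hp₀ hnorm hρ
      (fun q hq => (hρ_sphere q (hq.trans hp)).trans hρ₀.symm) hρ'
  have hud : HasFDerivAt u
      (((fderiv ℝ ρ p).smulRight (Real.exp (f p))).prod (fderiv ℝ v p)) p := by
    rw [funext hu]
    exact (hasFDerivAt_smul_of_eq_zero hρ.hasFDerivAt hρ₀ hf.rexp).prodMk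
      hvd.differentiableAt.hasFDerivAt
  refine ⟨hv_rad, hud.fderiv ▸ one_zero_mem_range_prod ?_ hv_rad⟩
  exact mul_ne_zero hρ_rad (Real.exp_ne_zero _)

end Radial

/-- Let `γ : S¹ → ℝⁿ` be a smooth embedding and `Γ` a smooth map on
a neighbourhood of `D²` satisfying the stereobiharmonic boundary conditions
`Γ(p) = γ(p)` and `∂_r Γ(p) = γ(p)` for `p ∈ S¹`.  Let `ρ` be a boundary defining
function, `N` and `f` smooth, and set `v = 2Γ/(1+‖p‖²) + ρ²·N` and
`u = (ρ·e^f, v)`.  Then the radial derivative `∂_r v(p)` vanishes for every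
`p ∈ S¹`, and the image of `Du_p` contains the vector `e₀ = (1,0)`: the surface
`u(D²)` meets the boundary hyperplane `{0} × ℝⁿ` orthogonally along `γ`. -/
theorem stereobiharmonic_model_orthogonal_at_boundary
    (n : ℕ) (hn : 1 ≤ n)
    (ρ : E2 → ℝ) (U : Set E2) (hρ : IsBoundaryDefiningFunction ρ U)
    (W : Set E2) (hW : IsOpen W) (hWD : closedBall (0 : E2) 1 ⊆ W)
    (Γ N : E2 → EuclideanSpace ℝ (Fin n)) (f : E2 → ℝ)
    (hΓ : ContDiffOn ℝ (⊤ : ℕ∞) Γ W)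
    (hN : ContDiffOn ℝ (⊤ : ℕ∞) N W)
    (hf : ContDiffOn ℝ (⊤ : ℕ∞) f W)
    (γ : E2 → EuclideanSpace ℝ (Fin n))
    (hγ_inj : Set.InjOn γ (sphere (0 : E2) 1))
    (hγ'_ne : ∀ p : E2, ‖p‖ = 1 → fderiv ℝ Γ p (perp p) ≠ 0)
    (hΓ_bdry : ∀ p : E2, ‖p‖ = 1 → Γ p = γ p)
    (hΓ_rad : ∀ p : E2, ‖p‖ = 1 → fderiv ℝ Γ p p = γ p)
    (v : E2 → EuclideanSpace ℝ (Fin n))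
    (hv : ∀ p : E2, v p = (2 / (1 + ‖p‖ ^ 2)) • Γ p + (ρ p) ^ 2 • N p)
    (u : E2 → ℝ × EuclideanSpace ℝ (Fin n))
    (hu : ∀ p : E2, u p = (ρ p * Real.exp (f p), v p)) :
    ∀ p : E2, ‖p‖ = 1 →
      fderiv ℝ v p p = 0 ∧
      ((1 : ℝ), (0 : EuclideanSpace ℝ (Fin n))) ∈ Set.range (fderiv ℝ u p) := by
  intro p hp
  have hpD : p ∈ closedBall (0 : E2) 1 := by simp [hp]
  have hWp : W ∈ 𝓝 p := hW.mem_nhds (hWD hpD)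
  have hUp : U ∈ 𝓝 p := hρ.isOpen.mem_nhds (hρ.disc_subset hpD)
  exact stereobiharmonic_model_orthogonal_at_boundary_general hp
    (differentiableAt_id.norm ℝ (norm_ne_zero_iff.1 (by simp [hp])))
    ((hρ.smooth.contDiffAt hUp).differentiableAt (by simp))
    (fun q hq => (hρ.zero_iff q (by simp [hq])).2 hq) (hρ.fderiv_ne_zero p hp)
    (hf.contDiffAt hWp).continuousAt (hN.contDiffAt hWp).continuousAt
    ((hΓ.contDiffAt hWp).differentiableAt (by simp))
    ((hΓ_rad p hp).trans (hΓ_bdry p hp).symm) hv hu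

end
end

section
/- Let n ≥ 1 and define Φ(X,Y) = ((X² + ‖Y‖² − 1)/((X+1)² + ‖Y‖²), 2Y/((X+1)² + ‖Y‖²)). Then for every (X,Y) with X > 0 and every tangent vector (a,b) ∈ ℝ × ℝⁿ, the Fréchet derivative of Φ satisfies 4·‖DΦ_{(X,Y)}(a,b)‖² / (1 − ‖Φ(X,Y)‖²)² = (a² + ‖b‖²)/X². That is, Φ is an isometry from the half-space model of hyperbolic (n+1)-space, with metric (dX² + ‖dY‖²)/X², to the unit ball model, with metric 4‖dy‖²/(1−‖y‖²)². -/
/-!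
`Φ` is the reflection `(X, Y) ↦ (-X, Y)` followed by the inversion centred at the north pole `N` of
radius `√2`, which exchanges the half-space `⟪N, x⟫ < 0` and the unit ball. An inversion is
conformal: its derivative at `x` is an orthogonal map scaled by `κ = (R / dist x N) ^ 2`, and for
`R = √2` the defect `1 - ‖y‖²` of the image `y` of `x` is `-2 κ ⟪N, x⟫`. The factors `κ` cancel in
the pulled-back ball metric, and the reflection turns `⟪N, x⟫` into `-X`.
-/

noncomputable section

/-- The map `Φ(X,Y) = ((X² + ‖Y‖² − 1)/((X+1)² + ‖Y‖²), 2Y/((X+1)² + ‖Y‖²))`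
from the half-space model of hyperbolic `(n+1)`-space to the unit ball model. -/
def Phi (n : ℕ) (p : ℝ × EuclideanSpace ℝ (Fin n)) : ℝ × EuclideanSpace ℝ (Fin n) :=
  ((p.1 ^ 2 + ‖p.2‖ ^ 2 - 1) / ((p.1 + 1) ^ 2 + ‖p.2‖ ^ 2),
    (2 / ((p.1 + 1) ^ 2 + ‖p.2‖ ^ 2)) • p.2)

open EuclideanGeometry WithLp
open scoped RealInnerProductSpace

section Inversion

variable {V : Type*} [NormedAddCommGroup V] [InnerProductSpace ℝ V] {c x : V} {R : ℝ}

theorem norm_fderiv_inversion_apply (hx : x ≠ c) (v : V) :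
    ‖fderiv ℝ (inversion c R) x v‖ = (R / dist x c) ^ 2 * ‖v‖ := by
  rw [(hasFDerivAt_inversion hx).fderiv, smul_apply, norm_smul,
    Real.norm_of_nonneg (sq_nonneg _)]
  simp

theorem norm_sq_sub_norm_inversion_sq (hR : R ^ 2 = 2 * ‖c‖ ^ 2) (hx : x ≠ c) :
    ‖c‖ ^ 2 - ‖inversion c R x‖ ^ 2 = (R / dist x c) ^ 2 * (-2 * ⟪c, x⟫) := by
  have hd : dist x c ≠ 0 := dist_ne_zero.mpr hx
  have hscale : (R / dist x c) ^ 2 * dist x c ^ 2 = 2 * ‖c‖ ^ 2 := by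
    rw [← mul_pow, div_mul_cancel₀ _ hd, hR]
  have hinner : ⟪x - c, c⟫ = ⟪c, x⟫ - ‖c‖ ^ 2 := by
    rw [inner_sub_left, real_inner_self_eq_norm_sq, real_inner_comm]
  have hexpand : ‖inversion c R x‖ ^ 2 = ((R / dist x c) ^ 2) ^ 2 * dist x c ^ 2 +
      2 * ((R / dist x c) ^ 2 * ⟪x - c, c⟫) + ‖c‖ ^ 2 := by
    rw [inversion, vsub_eq_sub, vadd_eq_add, norm_add_sq_real, real_inner_smul_left, norm_smul,
      mul_pow, Real.norm_eq_abs, sq_abs, dist_eq_norm]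
  rw [hexpand, hinner]
  linear_combination -(R / dist x c) ^ 2 * hscale

theorem inversion_pullback_ball_metric (hR : R ^ 2 = 2 * ‖c‖ ^ 2) (hx : x ≠ c)
    (hcx : ⟪c, x⟫ ≠ 0) (v : V) :
    4 * ‖fderiv ℝ (inversion c R) x v‖ ^ 2 / (‖c‖ ^ 2 - ‖inversion c R x‖ ^ 2) ^ 2 =
      ‖v‖ ^ 2 / ⟪c, x⟫ ^ 2 := by
  have hc : c ≠ 0 := by rintro rfl; simp at hcx
  have hR₀ : R ≠ 0 := by rintro rfl; simp [hc] at hR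
  have hscale : (R / dist x c) ^ 2 ≠ 0 := pow_ne_zero 2 (div_ne_zero hR₀ (dist_ne_zero.mpr hx))
  rw [norm_fderiv_inversion_apply hx, norm_sq_sub_norm_inversion_sq hR hx]
  generalize (R / dist x c) ^ 2 = k at hscale ⊢
  field_simp
  ring

end Inversion

section NormedSpace

variable {E : Type*} [NormedAddCommGroup E]

theorem norm_toLp_sq (p : ℝ × E) : ‖toLp 2 p‖ ^ 2 = p.1 ^ 2 + ‖p.2‖ ^ 2 := by
  simp [prod_norm_sq_eq_of_L2]

variable (E) in
/-- The north pole `N = (1, 0)` of the unit sphere of `ℝ × E` with its Euclidean norm. -/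
def northPole : WithLp 2 (ℝ × E) :=
  toLp 2 (1, 0)

theorem norm_northPole : ‖northPole E‖ = 1 := by
  simp [northPole]

variable [NormedSpace ℝ E]

/-- The map `Φ` with an arbitrary real normed space `E` in place of `ℝⁿ`. -/
def halfSpaceToBall (p : ℝ × E) : ℝ × E :=
  ((p.1 ^ 2 + ‖p.2‖ ^ 2 - 1) / ((p.1 + 1) ^ 2 + ‖p.2‖ ^ 2),
    (2 / ((p.1 + 1) ^ 2 + ‖p.2‖ ^ 2)) • p.2)

variable (E) in
/-- The reflection `(X, Y) ↦ (-X, Y)`, which exchanges the two half-spaces. Its codomain carries the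
Euclidean norm rather than the sup norm of `ℝ × E`, so that inversions can be applied after it. -/
def heightReflection : (ℝ × E) ≃L[ℝ] WithLp 2 (ℝ × E) :=
  ((ContinuousLinearEquiv.neg ℝ).prodCongr (.refl ℝ E)).trans
    (prodContinuousLinearEquiv 2 ℝ ℝ E).symm

theorem heightReflection_apply (p : ℝ × E) : heightReflection E p = toLp 2 (-p.1, p.2) :=
  rfl

theorem norm_heightReflection_sq (p : ℝ × E) :
    ‖heightReflection E p‖ ^ 2 = p.1 ^ 2 + ‖p.2‖ ^ 2 := by
  rw [heightReflection_apply, norm_toLp_sq, neg_sq]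

theorem heightReflection_ne_northPole {p : ℝ × E} (hp : p ≠ (-1, 0)) :
    heightReflection E p ≠ northPole E := by
  have hpole : heightReflection E (-1, 0) = northPole E := by
    simp [heightReflection_apply, northPole]
  exact hpole ▸ (heightReflection E).injective.ne hp

theorem dist_heightReflection_northPole_sq (p : ℝ × E) :
    dist (heightReflection E p) (northPole E) ^ 2 = (p.1 + 1) ^ 2 + ‖p.2‖ ^ 2 := by
  rw [dist_eq_norm, heightReflection_apply, northPole, ← toLp_sub, norm_toLp_sq,
    Prod.mk_sub_mk, sub_zero]
  ring

end NormedSpace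

section InnerProductSpace

variable {E : Type*} [NormedAddCommGroup E] [InnerProductSpace ℝ E]

theorem inner_northPole_heightReflection (p : ℝ × E) :
    ⟪northPole E, heightReflection E p⟫ = -p.1 := by
  simp [northPole, heightReflection_apply, prod_inner_apply]

theorem toLp_halfSpaceToBall {p : ℝ × E} (hp : p ≠ (-1, 0)) :
    toLp 2 (halfSpaceToBall p) = inversion (northPole E) √2 (heightReflection E p) := by
  have hscale : (√2 / dist (heightReflection E p) (northPole E)) ^ 2 =
      2 / ((p.1 + 1) ^ 2 + ‖p.2‖ ^ 2) := by
    rw [div_pow, Real.sq_sqrt zero_le_two, dist_heightReflection_northPole_sq]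
  have hden : (p.1 + 1) ^ 2 + ‖p.2‖ ^ 2 ≠ 0 := by
    rw [← dist_heightReflection_northPole_sq]
    exact pow_ne_zero 2 (dist_ne_zero.mpr (heightReflection_ne_northPole hp))
  rw [inversion, hscale, heightReflection_apply, northPole]
  refine congrArg (toLp 2) (Prod.ext ?_ ?_)
  · change _ / _ = 2 / _ * (-p.1 - 1) + 1
    field_simp
    ring
  · simp [halfSpaceToBall]

theorem toLp_fderiv_halfSpaceToBall {p : ℝ × E} (hp : p ≠ (-1, 0)) (v : ℝ × E) :
    toLp 2 (fderiv ℝ halfSpaceToBall p v) =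
      fderiv ℝ (inversion (northPole E) √2) (heightReflection E p) (heightReflection E v) := by
  let L := (prodContinuousLinearEquiv 2 ℝ ℝ E).symm
  have hcomp : L ∘ halfSpaceToBall =ᶠ[nhds p]
      inversion (northPole E) √2 ∘ heightReflection E := by
    filter_upwards [isOpen_ne.mem_nhds hp] with q hq using toLp_halfSpaceToBall hq
  have hfderiv := hcomp.fderiv_eq (𝕜 := ℝ)
  rw [L.comp_fderiv, (heightReflection E).comp_right_fderiv] at hfderiv
  exact DFunLike.congr_fun hfderiv v

theorem phi_isometry_halfSpace_to_ball_general {p : ℝ × E} (hp : p ≠ (-1, 0)) (hX : p.1 ≠ 0)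
    (v : ℝ × E) :
    4 * ((fderiv ℝ halfSpaceToBall p v).1 ^ 2 + ‖(fderiv ℝ halfSpaceToBall p v).2‖ ^ 2)
        / (1 - ((halfSpaceToBall p).1 ^ 2 + ‖(halfSpaceToBall p).2‖ ^ 2)) ^ 2
      = (v.1 ^ 2 + ‖v.2‖ ^ 2) / p.1 ^ 2 := by
  have hradius : √2 ^ 2 = 2 * ‖northPole E‖ ^ 2 := by
    rw [Real.sq_sqrt zero_le_two, norm_northPole, one_pow, mul_one]
  have hinner : ⟪northPole E, heightReflection E p⟫ ≠ 0 := by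
    rwa [inner_northPole_heightReflection, neg_ne_zero]
  have hmetric := inversion_pullback_ball_metric hradius (heightReflection_ne_northPole hp) hinner
    (heightReflection E v)
  rwa [← toLp_fderiv_halfSpaceToBall hp, ← toLp_halfSpaceToBall hp, norm_northPole, one_pow,
    norm_toLp_sq, norm_toLp_sq, norm_heightReflection_sq, inner_northPole_heightReflection,
    neg_sq] at hmetric

end InnerProductSpace

/-- `Φ` is an isometry from the half-space model, with metric
`(dX² + ‖dY‖²)/X²`, to the unit ball model, with metric `4‖dy‖²/(1 − ‖y‖²)²`:
for every `(X,Y)` with `X > 0` and every tangent vector `(a,b)`,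
`4‖DΦ_{(X,Y)}(a,b)‖²/(1 − ‖Φ(X,Y)‖²)² = (a² + ‖b‖²)/X²`,
where all norms on `ℝ × ℝⁿ = ℝ^{1+n}` are Euclidean. -/
theorem phi_isometry_halfSpace_to_ball (n : ℕ) (hn : 1 ≤ n)
    (X : ℝ) (Y : EuclideanSpace ℝ (Fin n)) (hX : 0 < X)
    (a : ℝ) (b : EuclideanSpace ℝ (Fin n)) :
    4 * ((fderiv ℝ (Phi n) (X, Y) (a, b)).1 ^ 2 + ‖(fderiv ℝ (Phi n) (X, Y) (a, b)).2‖ ^ 2)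
        / (1 - ((Phi n (X, Y)).1 ^ 2 + ‖(Phi n (X, Y)).2‖ ^ 2)) ^ 2
      = (a ^ 2 + ‖b‖ ^ 2) / X ^ 2 := by
  exact phi_isometry_halfSpace_to_ball_general (p := (X, Y))
    (fun h ↦ by linarith [congrArg Prod.fst h]) hX.ne' (a, b)

end
end
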